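/- Let u^1,...,u^L satisfy the gradient flow of a deep diagonal linear network, and assume that for every component i ∈ [d] the minimizer of k ↦ |u^k_i(0)| is unique (attained at layer k_i). Then for all t ≥ 0 and all i ∈ [d], Σ_{j=1}^L Π_{k≠j} u^k_i(t)^2 ≥ Π_{k≠k_i} (u^k_i(0)^2 - u^{k_i}_i(0)^2) > 0. In particular the diagonal matrix M(t) = diag((Σ_j Π_{k≠j} u^k_i(t)^2)_i) is invertible for every t ≥ 0, with smallest eigenvalue bounded below by σ := min_i Π_{k≠k_i}(u^k_i(0)^2 - u^{k_i}_i(0)^2). -/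

import Mathlib

open Finset

/-- The gradient of `f : ℝ^d → ℝ`, given componentwise by the partial derivatives. -/
noncomputable def grad {d : ℕ} (f : (Fin d → ℝ) → ℝ) (x : Fin d → ℝ) (i : Fin d) : ℝ :=
  fderiv ℝ f x (Pi.single i 1)

theorem stmt_6 {L d : ℕ} (u : Fin L → ℝ → Fin d → ℝ) (Loss : (Fin d → ℝ) → ℝ)
    (hLoss : ContDiff ℝ 1 Loss)
    (θ : ℝ → Fin d → ℝ) (hθ : ∀ t i, θ t i = ∏ j, u j t i)
    (hflow : ∀ j, ∀ t ≥ (0:ℝ), ∀ i,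
      HasDerivAt (fun s => u j s i)
        (-((∏ k ∈ Finset.univ.erase j, u k t i) * grad Loss (θ t) i)) t)
    (kmin : Fin d → Fin L)
    (hkmin : ∀ i, ∀ k : Fin L, k ≠ kmin i → |u (kmin i) 0 i| < |u k 0 i|) :
    ∀ t ≥ (0:ℝ), ∀ i,
      (∏ k ∈ Finset.univ.erase (kmin i), (u k 0 i ^ 2 - u (kmin i) 0 i ^ 2))
          ≤ ∑ j, ∏ k ∈ Finset.univ.erase j, u k t i ^ 2 ∧
      0 < ∏ k ∈ Finset.univ.erase (kmin i), (u k 0 i ^ 2 - u (kmin i) 0 i ^ 2) := by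
  intro t ht i
  have hpos : ∀ k ∈ Finset.univ.erase (kmin i), 0 < u k 0 i ^ 2 - u (kmin i) 0 i ^ 2 := by
    intro k hk
    have h := sq_lt_sq.mpr (hkmin i k (Finset.ne_of_mem_erase hk))
    linarith
  refine ⟨?_, Finset.prod_pos hpos⟩
  have hd : ∀ j, ∀ s ≥ (0:ℝ), HasDerivAt (fun s => u j s i ^ 2)
      (-(2 * (∏ k, u k s i) * grad Loss (θ s) i)) s := by
    intro j s hs
    have h := (hflow j s hs i).pow 2
    refine h.congr_deriv ?_
    rw [← Finset.mul_prod_erase Finset.univ (fun k => u k s i) (Finset.mem_univ j)]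
    push_cast
    ring
  have hcons : ∀ k, u k t i ^ 2 - u (kmin i) t i ^ 2 = u k 0 i ^ 2 - u (kmin i) 0 i ^ 2 := by
    intro k
    have hdiff : ∀ s ≥ (0:ℝ), HasDerivAt (fun s => u k s i ^ 2 - u (kmin i) s i ^ 2) 0 s := by
      intro s hs
      exact ((hd k s hs).sub (hd (kmin i) s hs)).congr_deriv (sub_self _)
    exact constant_of_has_deriv_right_zero (a := 0) (b := t)
      (fun s hs => (hdiff s hs.1).continuousAt.continuousWithinAt)
      (fun s hs => (hdiff s hs.1).hasDerivWithinAt) t ⟨ht, le_refl t⟩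
  calc (∏ k ∈ Finset.univ.erase (kmin i), (u k 0 i ^ 2 - u (kmin i) 0 i ^ 2))
      ≤ ∏ k ∈ Finset.univ.erase (kmin i), u k t i ^ 2 := by
        refine Finset.prod_le_prod (fun k hk => (hpos k hk).le) (fun k _ => ?_)
        have h := hcons k
        have h2 := sq_nonneg (u (kmin i) t i)
        linarith
    _ ≤ ∑ j, ∏ k ∈ Finset.univ.erase j, u k t i ^ 2 :=
        Finset.single_le_sum (f := fun j => ∏ k ∈ Finset.univ.erase j, u k t i ^ 2)
          (fun j _ => Finset.prod_nonneg (fun k _ => sq_nonneg _)) (Finset.mem_univ (kmin i))
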